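/- Let m ∈ ℕ with m ≥ 2. If V̂ ∈ 𝒱_m maximizes the (real-valued, since Y is Hermitian) objective Re⟨Y, Vᴴ V⟩ over all V ∈ 𝒱_m, then ℓ_m(V̂, z*) ≤ 8σ‖W‖/n. -/

import Mathlib

open scoped Classical
open Matrix

noncomputable section

namespace PhaseSync

/-- Euclidean norm of a complex vector. -/
def enorm {k : ℕ} (v : Fin k → ℂ) : ℝ := Real.sqrt (∑ i, ‖v i‖ ^ 2)

/-- Frobenius norm of a complex matrix. -/
def fnorm {k l : ℕ} (A : Matrix (Fin k) (Fin l) ℂ) : ℝ :=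
  Real.sqrt (∑ i, ∑ j, ‖A i j‖ ^ 2)

/-- L2 operator norm of a square complex matrix. -/
def opNorm {k : ℕ} (A : Matrix (Fin k) (Fin k) ℂ) : ℝ :=
  ‖Matrix.toEuclideanCLM (𝕜 := ℂ) (n := Fin k) A‖

/-- Indicator function of a proposition. -/
def ind (P : Prop) : ℝ := if P then 1 else 0

/-- The loss ℓ_m(V, z) = min_{a : ‖a‖=1} ‖V - a zᴴ‖_F² / n. -/
def lossM {k l : ℕ} (V : Matrix (Fin k) (Fin l) ℂ) (z : Fin l → ℂ) : ℝ :=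
  sInf { r : ℝ | ∃ a : Fin k → ℂ, enorm a = 1 ∧
    r = fnorm (V - Matrix.vecMulVec a (star z)) ^ 2 / l }

/-- The loss ℓ_1(z', z) = min_{|a|=1} ‖z' - a z‖² / n. -/
def loss1 {l : ℕ} (z' z : Fin l → ℂ) : ℝ :=
  sInf { r : ℝ | ∃ a : ℂ, ‖a‖ = 1 ∧ r = enorm (z' - a • z) ^ 2 / l }

/-- The mapping F₁: entrywise normalization of Y z. -/
def F1 {l : ℕ} (Y : Matrix (Fin l) (Fin l) ℂ) (z : Fin l → ℂ) : Fin l → ℂ :=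
  fun j => if Y.mulVec z j ≠ 0 then Y.mulVec z j / (‖Y.mulVec z j‖ : ℂ) else z j

/-- jth column of a matrix. -/
def col {k l : ℕ} (A : Matrix (Fin k) (Fin l) ℂ) (j : Fin l) : Fin k → ℂ := fun i => A i j

/-- The mapping F_m: columnwise normalization of V Yᴴ. -/
def Fm {k l : ℕ} (Y : Matrix (Fin l) (Fin l) ℂ) (V : Matrix (Fin k) (Fin l) ℂ) :
    Matrix (Fin k) (Fin l) ℂ :=
  Matrix.of fun i j =>
    if col (V * Yᴴ) j ≠ 0 then (V * Yᴴ) i j / ((enorm (col (V * Yᴴ) j) : ℝ) : ℂ) else V i j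

/-- g_t(x) = x / max(|x|, t). -/
def gfun (t : ℝ) (x : ℂ) : ℂ := x / ((max ‖x‖ t : ℝ) : ℂ)

/-- The mapping G(z, s, t), coordinatewise g_t(z*_j s + σ [W z]_j). -/
def G {l : ℕ} (zstar : Fin l → ℂ) (σ : ℝ) (W : Matrix (Fin l) (Fin l) ℂ)
    (z : Fin l → ℂ) (s : ℂ) (t : ℝ) : Fin l → ℂ :=
  fun j => gfun t (zstar j * s + (σ : ℂ) * W.mulVec z j)

/-- The mapping F₁'(z, s), entrywise normalization of z* s + σ W z. -/
def F1' {l : ℕ} (zstar : Fin l → ℂ) (σ : ℝ) (W : Matrix (Fin l) (Fin l) ℂ)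
    (z : Fin l → ℂ) (s : ℂ) : Fin l → ℂ :=
  fun j =>
    if zstar j * s + (σ : ℂ) * W.mulVec z j ≠ 0 then
      (zstar j * s + (σ : ℂ) * W.mulVec z j) /
        ((‖zstar j * s + (σ : ℂ) * W.mulVec z j‖ : ℝ) : ℂ)
    else z j

/-- W with jth row and column zeroed out. -/
def Wminus {l : ℕ} (W : Matrix (Fin l) (Fin l) ℂ) (j : Fin l) : Matrix (Fin l) (Fin l) ℂ :=
  Matrix.of fun k i => if k = j ∨ i = j then 0 else W k i

lemma enorm_sq' {k : ℕ} (v : Fin k → ℂ) : enorm v ^ 2 = ∑ i, ‖v i‖ ^ 2 :=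
  Real.sq_sqrt (Finset.sum_nonneg fun _ _ => sq_nonneg _)

lemma fnorm_sq' {k l : ℕ} (A : Matrix (Fin k) (Fin l) ℂ) :
    fnorm A ^ 2 = ∑ i, ∑ j, ‖A i j‖ ^ 2 :=
  Real.sq_sqrt (Finset.sum_nonneg fun _ _ => Finset.sum_nonneg fun _ _ => sq_nonneg _)

lemma quad_bound {n : ℕ} (W : Matrix (Fin n) (Fin n) ℂ) (x : Fin n → ℂ) :
    ‖star x ⬝ᵥ (W *ᵥ x)‖ ≤ opNorm W * ∑ i, ‖x i‖ ^ 2 := by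
  have h1 : star x ⬝ᵥ (W *ᵥ x) = inner ℂ (WithLp.toLp 2 x)
      (Matrix.toEuclideanCLM (𝕜 := ℂ) (n := Fin n) W (WithLp.toLp 2 x)) := by
    rw [Matrix.toEuclideanCLM_toLp, EuclideanSpace.inner_toLp_toLp, dotProduct_comm]
  rw [h1]
  have h2 := norm_inner_le_norm (𝕜 := ℂ) (WithLp.toLp 2 x)
      (Matrix.toEuclideanCLM (𝕜 := ℂ) (n := Fin n) W (WithLp.toLp 2 x))
  have h3 := (Matrix.toEuclideanCLM (𝕜 := ℂ) (n := Fin n) W).le_opNorm (WithLp.toLp 2 x)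
  have h4 : ‖WithLp.toLp 2 x‖ ^ 2 = ∑ i, ‖x i‖ ^ 2 := EuclideanSpace.norm_sq_eq _
  rw [← h4]
  unfold opNorm
  nlinarith [norm_nonneg (WithLp.toLp 2 x)]

lemma col_sum {n m : ℕ} (V : Matrix (Fin m) (Fin n) ℂ) (hV : ∀ j, enorm (col V j) = 1) :
    ∑ i, ∑ j, ‖V i j‖ ^ 2 = (n : ℝ) := by
  rw [Finset.sum_comm]
  have : ∀ j, ∑ i, ‖V i j‖ ^ 2 = 1 := fun j => by
    have := enorm_sq' (col V j)
    rw [hV j] at this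
    simpa [col] using this.symm
  simp [this]

lemma trace_bound {n m : ℕ} (W : Matrix (Fin n) (Fin n) ℂ) (V : Matrix (Fin m) (Fin n) ℂ)
    (hV : ∀ j, enorm (col V j) = 1) :
    |(Matrix.trace (W * (Vᴴ * V))).re| ≤ opNorm W * n := by
  have h : Matrix.trace (W * (Vᴴ * V)) =
      ∑ i, star (fun k => star (V i k)) ⬝ᵥ (W *ᵥ (fun k => star (V i k))) := by
    rw [← Matrix.mul_assoc, Matrix.trace_mul_comm]
    simp only [Matrix.trace, Matrix.diag, Matrix.mul_apply, dotProduct, mulVec, Pi.star_apply,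
      star_star, conjTranspose_apply]
  refine (Complex.abs_re_le_norm _).trans ?_
  rw [h]
  refine (norm_sum_le _ _).trans ?_
  rw [← col_sum V hV, Finset.mul_sum]
  refine Finset.sum_le_sum fun i _ => ?_
  refine (quad_bound W _).trans (le_of_eq ?_)
  simp

lemma trace_rank_one {n m : ℕ} (z : Fin n → ℂ) (V : Matrix (Fin m) (Fin n) ℂ) :
    (Matrix.trace (Matrix.vecMulVec z (star z) * (Vᴴ * V))).re = enorm (V *ᵥ z) ^ 2 := by
  have h : Matrix.trace (Matrix.vecMulVec z (star z) * (Vᴴ * V)) =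
      star (V *ᵥ z) ⬝ᵥ (V *ᵥ z) := by
    rw [Matrix.trace_mul_comm, Matrix.mul_vecMulVec, Matrix.trace_vecMulVec, dotProduct_comm,
      ← Matrix.mulVec_mulVec, Matrix.star_mulVec, Matrix.dotProduct_mulVec]
  rw [h, enorm_sq', dotProduct, Complex.re_sum]
  refine Finset.sum_congr rfl fun i _ => ?_
  rw [← Complex.normSq_eq_norm_sq]
  simp [Complex.normSq_apply]

lemma exists_dir {m : ℕ} (hm : 2 ≤ m) (u : Fin m → ℂ) :
    ∃ a : Fin m → ℂ, enorm a = 1 ∧ (∑ i, star (a i) * u i).re = enorm u := by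
  have hs := enorm_sq' u
  by_cases h : enorm u = 0
  · refine ⟨Pi.single ⟨0, by omega⟩ 1, ?_, ?_⟩
    · unfold enorm
      rw [Finset.sum_eq_single (⟨0, by omega⟩ : Fin m)]
      · simp
      · intro b _ hb
        simp [Pi.single_eq_of_ne hb]
      · simp
    · rw [h] at hs ⊢
      have hu : ∀ i, u i = 0 := by
        intro i
        have := (Finset.sum_eq_zero_iff_of_nonneg (fun i _ => sq_nonneg ‖u i‖)).1
          (by simpa using hs.symm) i (Finset.mem_univ i)
        simpa using this
      simp [hu]
  · refine ⟨fun i => u i / (enorm u : ℂ), ?_, ?_⟩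
    · have h0 : 0 ≤ enorm u := Real.sqrt_nonneg _
      have h1 : ∑ i, ‖u i / (enorm u : ℂ)‖ ^ 2 = 1 := by
        simp only [norm_div, div_pow, ← Finset.sum_div, Complex.norm_real, Real.norm_eq_abs,
          sq_abs]
        rw [← hs]
        exact div_self (pow_ne_zero _ h)
      rw [enorm, h1, Real.sqrt_one]
    · have : ∀ i, star (u i / (enorm u : ℂ)) * u i = ((‖u i‖ ^ 2 / enorm u : ℝ) : ℂ) := by
        intro i
        push_cast
        rw [← Complex.conj_mul']
        simp [div_mul_eq_mul_div]
      simp only [this]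
      rw [← Complex.ofReal_sum, Complex.ofReal_re, ← Finset.sum_div, ← hs]
      field_simp

lemma fnorm_diff {n m : ℕ} (z : Fin n → ℂ) (hz : ∀ j, ‖z j‖ = 1)
    (V : Matrix (Fin m) (Fin n) ℂ) (hV : ∀ j, enorm (col V j) = 1)
    (a : Fin m → ℂ) (ha : enorm a = 1) :
    fnorm (V - Matrix.vecMulVec a (star z)) ^ 2
      = 2 * n - 2 * (∑ i, star (a i) * (V *ᵥ z) i).re := by
  have ha2 := enorm_sq' a
  rw [ha] at ha2
  have h1 : ∀ i j, ‖(V - Matrix.vecMulVec a (star z)) i j‖ ^ 2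
      = ‖V i j‖ ^ 2 + ‖a i‖ ^ 2 - 2 * (star (a i) * (V i j * z j)).re := by
    intro i j
    have hz1 : (z j).re * (z j).re + (z j).im * (z j).im = 1 := by
      rw [← Complex.normSq_apply, Complex.normSq_eq_norm_sq, hz j, one_pow]
    simp only [← Complex.normSq_eq_norm_sq, Complex.normSq_apply, Matrix.sub_apply,
      vecMulVec_apply, Pi.star_apply, Complex.sub_re, Complex.sub_im, Complex.mul_re,
      Complex.mul_im, Complex.star_def, Complex.conj_re, Complex.conj_im]
    linear_combination ((a i).re ^ 2 + (a i).im ^ 2) * hz1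
  rw [fnorm_sq']
  simp only [h1, Finset.sum_sub_distrib, Finset.sum_add_distrib, col_sum V hV,
    Finset.sum_const, Finset.card_univ, Fintype.card_fin, nsmul_eq_mul, ← Finset.mul_sum,
    ← Complex.re_sum, ← ha2]
  simp only [mulVec, dotProduct]
  ring

theorem stmt10 {n m : ℕ} (hn : 1 ≤ n) (hm : 2 ≤ m)
    (zstar : Fin n → ℂ) (hzstar : ∀ j, ‖zstar j‖ = 1)
    (σ : ℝ) (hσ : 0 < σ) (W : Matrix (Fin n) (Fin n) ℂ) (hW : W.IsHermitian)
    (Y : Matrix (Fin n) (Fin n) ℂ)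
    (hY : Y = Matrix.vecMulVec zstar (star zstar) + (σ : ℂ) • W)
    (Vhat : Matrix (Fin m) (Fin n) ℂ) (hVhat : ∀ j, enorm (col Vhat j) = 1)
    (hmax : ∀ V : Matrix (Fin m) (Fin n) ℂ, (∀ j, enorm (col V j) = 1) →
      (Matrix.trace (Yᴴ * (Vᴴ * V))).re ≤ (Matrix.trace (Yᴴ * (Vhatᴴ * Vhat))).re) :
    lossM Vhat zstar ≤ 8 * σ * opNorm W / n := by
  subst hY
  have hT : ∀ V : Matrix (Fin m) (Fin n) ℂ,
      (Matrix.trace ((Matrix.vecMulVec zstar (star zstar) + (σ : ℂ) • W)ᴴ * (Vᴴ * V))).re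
        = enorm (V *ᵥ zstar) ^ 2 + σ * (Matrix.trace (W * (Vᴴ * V))).re := by
    intro V
    have e : (Matrix.vecMulVec zstar (star zstar) + (σ : ℂ) • W)ᴴ
        = Matrix.vecMulVec zstar (star zstar) + (σ : ℂ) • W := by
      rw [conjTranspose_add, conjTranspose_smul, hW.eq, conjTranspose_vecMulVec]
      simp
    rw [e, Matrix.add_mul, Matrix.trace_add, Complex.add_re, trace_rank_one, Matrix.smul_mul,
      Matrix.trace_smul, smul_eq_mul, Complex.re_ofReal_mul]
  obtain ⟨a, ha, hau⟩ := exists_dir hm (Vhat *ᵥ zstar)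
  have ha2 := enorm_sq' a
  rw [ha] at ha2
  have hV0 : ∀ j, enorm (col (Matrix.vecMulVec a (star zstar)) j) = 1 := by
    intro j
    rw [← ha]
    simp [enorm, col, vecMulVec_apply, hzstar]
  have hV0z : enorm (Matrix.vecMulVec a (star zstar) *ᵥ zstar) ^ 2 = (n : ℝ) ^ 2 := by
    have h : star zstar ⬝ᵥ zstar = (n : ℂ) := by
      simp only [dotProduct, Pi.star_apply, Complex.star_def, Complex.conj_mul', hzstar]
      simp
    rw [Matrix.vecMulVec_mulVec, h, enorm_sq']
    simp [mul_pow, ← Finset.sum_mul, ← ha2]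
  have key := hmax _ hV0
  rw [hT, hT, hV0z] at key
  have b1 := abs_le.1 (trace_bound W _ hV0)
  have b2 := abs_le.1 (trace_bound W _ hVhat)
  have hd := fnorm_diff zstar hzstar Vhat hVhat a ha
  rw [hau] at hd
  have hn0 : (0 : ℝ) < n := by exact_mod_cast hn
  have hs0 : 0 ≤ enorm (Vhat *ᵥ zstar) := Real.sqrt_nonneg _
  have hop : 0 ≤ opNorm W := norm_nonneg _
  have hle : lossM Vhat zstar ≤ fnorm (Vhat - Matrix.vecMulVec a (star zstar)) ^ 2 / n := by
    refine csInf_le ⟨0, ?_⟩ ⟨a, ha, rfl⟩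
    rintro r ⟨b, _, rfl⟩
    positivity
  refine hle.trans ?_
  rw [hd]
  gcongr
  have c1 := mul_le_mul_of_nonneg_left b1.1 hσ.le
  have c2 := mul_le_mul_of_nonneg_left b2.2 hσ.le
  have hso : 0 ≤ σ * opNorm W := by positivity
  set s := enorm (Vhat *ᵥ zstar)
  by_contra hc
  push Not at hc
  have h5 : (n : ℝ) * (n - s) > n * (4 * (σ * opNorm W)) := by
    apply mul_lt_mul_of_pos_left _ hn0
    linarith
  have h6 : 0 ≤ s * (n - s) := mul_nonneg hs0 (by linarith)
  nlinarith [mul_nonneg hn0.le hso]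

end PhaseSync
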